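/- Let f : ℝ → ℝ be C² with f and f' bounded and f ∈ L¹(ℝ), and let K(x) = -log|tanh x|. Then for every x ∈ ℝ, the convolution K * f is twice differentiable at x and (K*f)''(x) = ∫_ℝ [f(x+z) - f(x) - z f'(x)] K''(z) dz, where the integrand is integrable since |f(x+z) - f(x) - zf'(x)| ≤ C z² near z = 0 and K''(z) ≤ C/z². -/

import Mathlib

open MeasureTheory

noncomputable def Kfun (x : ℝ) : ℝ := -Real.log |Real.tanh x|

open Filter Topology Set

lemma aux_int_abs (g : ℝ → ℝ) (h : IntegrableOn g (Ioi 0)) : Integrable (fun z => g |z|) := by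
  have h1 : IntegrableOn (fun z => g |z|) (Ioi 0) :=
    h.congr_fun (fun x hx => by simp only [abs_of_pos (mem_Ioi.1 hx)]) measurableSet_Ioi
  rw [← integrableOn_univ, ← @Iio_union_Ici _ _ (0 : ℝ), integrableOn_union,
    integrableOn_Ici_iff_integrableOn_Ioi]
  refine ⟨?_, h1⟩
  rw [← (Measure.measurePreserving_neg (volume : Measure ℝ)).integrableOn_comp_preimage
      (Homeomorph.neg ℝ).measurableEmbedding]
  simpa only [Function.comp_def, abs_neg, neg_preimage, neg_Iio, neg_zero] using h1

lemma aux_int_exp : Integrable (fun z : ℝ => Real.exp (-|z|)) :=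
  aux_int_abs (fun z => Real.exp (-z)) (integrableOn_exp_neg_Ioi 0)

lemma aux_int_sqrt : Integrable (fun z : ℝ => √(Real.exp (-|z|) / |z|)) := by
  apply aux_int_abs (fun z => √(Real.exp (-z) / z))
  have := integrableOn_rpow_mul_exp_neg_mul_rpow (p := 1) (s := -1/2) (b := 1/2)
    (by norm_num) (by norm_num) (by norm_num)
  refine this.congr_fun (fun x hx => ?_) measurableSet_Ioi
  have hx' : 0 < x := hx
  simp only [Real.rpow_one]
  rw [Real.sqrt_div (Real.exp_pos _).le, ← Real.exp_half, Real.sqrt_eq_rpow x,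
    show (-1/2 : ℝ) = -(1/2) by norm_num, Real.rpow_neg hx'.le]
  rw [show -(1 / 2) * x = -x / 2 by ring, mul_comm, ← div_eq_mul_inv]

lemma aux_sinh_lb {z : ℝ} (hz : 0 < z) : z * Real.exp z ≤ Real.sinh (2 * z) := by
  rw [Real.sinh_two_mul]
  have h1 : z ≤ Real.sinh z := Real.self_le_sinh_iff.2 hz.le
  have h2 : Real.exp z ≤ 2 * Real.cosh z := by
    rw [Real.cosh_eq]; linarith [Real.exp_pos (-z)]
  nlinarith [Real.exp_pos z]

noncomputable def auxk1 (z : ℝ) : ℝ := -(2 / Real.sinh (2 * z))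
noncomputable def auxk2 (z : ℝ) : ℝ := 4 * Real.cosh (2 * z) / Real.sinh (2 * z) ^ 2

lemma aux_sinh_ne {z : ℝ} (hz : z ≠ 0) : Real.sinh z ≠ 0 := by
  simpa using hz

lemma aux_k1 {z : ℝ} (hz : z ≠ 0) : HasDerivAt Kfun (auxk1 z) z := by
  have hs := aux_sinh_ne hz
  have hc := (Real.cosh_pos z).ne'
  have h := ((Real.hasDerivAt_sinh z).log hs).sub ((Real.hasDerivAt_cosh z).log hc)
  have h2 := h.neg
  have e : -(Real.cosh z / Real.sinh z - Real.sinh z / Real.cosh z) = auxk1 z := by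
    unfold auxk1
    rw [Real.sinh_two_mul]
    have := Real.cosh_sq z
    field_simp
    linarith
  rw [e] at h2
  refine h2.congr_of_eventuallyEq ?_
  filter_upwards [eventually_ne_nhds hz] with y hy
  simp [Kfun, Real.log_abs, Real.tanh_eq_sinh_div_cosh,
    Real.log_div (aux_sinh_ne hy) (Real.cosh_pos y).ne']

lemma aux_k2 {z : ℝ} (hz : z ≠ 0) : HasDerivAt auxk1 (auxk2 z) z := by
  have hs : Real.sinh (2 * z) ≠ 0 := aux_sinh_ne (by simpa using hz)
  have h0 : HasDerivAt (fun y : ℝ => 2 * y) 2 z := by simpa using (hasDerivAt_id z).const_mul 2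
  have h1 : HasDerivAt (fun y : ℝ => Real.sinh (2 * y)) (Real.cosh (2 * z) * 2) z := h0.sinh
  have h2 := ((hasDerivAt_const z (2 : ℝ)).div h1 hs).neg
  refine h2.congr_deriv ?_
  unfold auxk2
  field_simp
  ring

lemma aux_dd {z : ℝ} (hz : z ≠ 0) : deriv (deriv Kfun) z = auxk2 z := by
  have : deriv Kfun =ᶠ[𝓝 z] auxk1 := by
    filter_upwards [eventually_ne_nhds hz] with y hy using (aux_k1 hy).deriv
  rw [this.deriv_eq, (aux_k2 hz).deriv]

lemma aux_even (z : ℝ) : Kfun (-z) = Kfun z := by simp [Kfun]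

lemma aux_K_bd (z : ℝ) : |Kfun z| ≤ 2 * √(Real.exp (-|z|) / |z|) := by
  have key : ∀ z : ℝ, 0 < z → |Kfun z| ≤ 2 * √(Real.exp (-z) / z) := by
    intro z hz
    have hs := Real.sinh_pos_iff.2 hz
    have hc := Real.cosh_pos z
    have e : Kfun z = Real.log (Real.cosh z / Real.sinh z) := by
      rw [Kfun, Real.log_abs, Real.tanh_eq_sinh_div_cosh, ← Real.log_inv, inv_div]
    have hy : 1 ≤ Real.cosh z / Real.sinh z := by
      rw [one_le_div hs]; exact (Real.sinh_lt_cosh z).le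
    rw [e, abs_of_nonneg (Real.log_nonneg hy)]
    have hq : Real.cosh z / Real.sinh z ≤ 1 + Real.exp (-z) / z := by
      have h1 : z ≤ Real.sinh z := Real.self_le_sinh_iff.2 hz.le
      have h2 : Real.cosh z / Real.sinh z = 1 + Real.exp (-z) / Real.sinh z := by
        rw [← Real.cosh_sub_sinh]; field_simp; ring
      rw [h2]
      have := Real.exp_pos (-z)
      gcongr
    set q := Real.exp (-z) / z
    have hq0 : 0 ≤ q := by positivity
    have h3 : Real.cosh z / Real.sinh z ≤ (1 + √q) ^ 2 := by
      nlinarith [Real.sq_sqrt hq0, Real.sqrt_nonneg q]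
    have hp : 0 < 1 + √q := by positivity
    calc Real.log (Real.cosh z / Real.sinh z) ≤ Real.log ((1 + √q) ^ 2) :=
          Real.log_le_log (by linarith) h3
      _ = 2 * Real.log (1 + √q) := by rw [Real.log_pow]; norm_num
      _ ≤ 2 * √q := by linarith [Real.log_le_sub_one_of_pos hp]
  rcases lt_trichotomy z 0 with h | h | h
  · have := key (-z) (by linarith)
    rwa [aux_even, ← abs_of_neg h] at this
  · simp [h, Kfun]
  · have := key z h
    rwa [abs_of_pos h]

lemma aux_k1_bd (z : ℝ) : |auxk1 z| ≤ 2 * (Real.exp (-|z|) / |z|) := by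
  have key : ∀ z : ℝ, 0 < z → |auxk1 z| ≤ 2 * (Real.exp (-z) / z) := by
    intro z hz
    have h := aux_sinh_lb hz
    have hp : 0 < z * Real.exp z := by positivity
    unfold auxk1
    rw [abs_neg, abs_of_pos (by apply div_pos two_pos; linarith)]
    calc 2 / Real.sinh (2 * z) ≤ 2 / (z * Real.exp z) := by gcongr
      _ = _ := by rw [Real.exp_neg]; field_simp
  rcases lt_trichotomy z 0 with h | h | h
  · have := key (-z) (by linarith)
    have e : auxk1 (-z) = - auxk1 z := by simp [auxk1, div_neg]
    rwa [e, abs_neg, ← abs_of_neg h] at this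
  · simp [h, auxk1]
  · have := key z h
    rwa [abs_of_pos h]

lemma aux_k2_bd (z : ℝ) : |auxk2 z| ≤ 8 * (Real.exp (-|z|) / |z| ^ 2) := by
  have key : ∀ z : ℝ, 0 < z → |auxk2 z| ≤ 8 * (Real.exp (-z) / z ^ 2) := by
    intro z hz
    have h := aux_sinh_lb (half_pos hz)
    rw [show 2 * (z / 2) = z by ring] at h
    have hp : 0 < z / 2 * Real.exp (z / 2) := by positivity
    have hs := Real.sinh_pos_iff.2 hz
    have hc := Real.cosh_pos z
    have hc2 := Real.cosh_pos (2 * z)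
    unfold auxk2
    rw [abs_of_nonneg (by positivity)]
    calc 4 * Real.cosh (2 * z) / Real.sinh (2 * z) ^ 2
        ≤ 4 * (2 * Real.cosh z ^ 2) / Real.sinh (2 * z) ^ 2 := by
          gcongr
          rw [Real.cosh_two_mul]
          linarith [Real.cosh_sq z]
      _ = 2 / Real.sinh z ^ 2 := by
          rw [Real.sinh_two_mul]; field_simp; ring
      _ ≤ 2 / (z / 2 * Real.exp (z / 2)) ^ 2 := by gcongr
      _ = _ := by
          rw [mul_pow, ← Real.exp_nat_mul, Real.exp_neg]
          rw [show ((2 : ℕ) : ℝ) * (z / 2) = z by push_cast; ring]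
          field_simp; ring
  rcases lt_trichotomy z 0 with h | h | h
  · have := key (-z) (by linarith)
    have e : auxk2 (-z) = auxk2 z := by simp [auxk2]
    rwa [e, ← abs_of_neg h] at this
  · simp [h, auxk2]
  · have := key z h
    rwa [abs_of_pos h]

lemma aux_K_meas : Measurable Kfun := by
  have : Measurable Real.tanh := by
    have e : Real.tanh = fun x => Real.sinh x / Real.cosh x := by
      ext x; exact Real.tanh_eq_sinh_div_cosh x
    rw [e]; exact Real.measurable_sinh.div Real.measurable_cosh
  unfold Kfun
  fun_prop

lemma aux_k1_meas : Measurable auxk1 := by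
  unfold auxk1
  fun_prop

lemma aux_k2_meas : Measurable auxk2 := by
  unfold auxk2
  fun_prop

lemma aux_K_int : Integrable Kfun :=
  (aux_int_sqrt.const_mul 2).mono' aux_K_meas.aestronglyMeasurable
    (Eventually.of_forall fun z => aux_K_bd z)

noncomputable def auxB (z : ℝ) : ℝ := √(|z| * Real.exp (-|z|))

lemma auxB_cont : Continuous auxB := by unfold auxB; fun_prop

lemma auxB_top : Tendsto auxB atTop (𝓝 0) := by
  have h := Real.tendsto_pow_mul_exp_neg_atTop_nhds_zero 1
  have h2 := (Real.continuous_sqrt.tendsto 0).comp h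
  rw [Real.sqrt_zero] at h2
  refine h2.congr' ?_
  filter_upwards [eventually_gt_atTop 0] with z hz
  simp [auxB, abs_of_pos hz]

lemma auxB_bot : Tendsto auxB atBot (𝓝 0) := by
  have h := auxB_top.comp tendsto_neg_atBot_atTop
  refine h.congr fun z => by simp [auxB]

lemma aux_ibp (k k' A A' : ℝ → ℝ) (C : ℝ) (hk : ∀ z, z ≠ 0 → HasDerivAt k (k' z) z)
    (hA : ∀ z, HasDerivAt A (A' z) z) (h1 : Integrable (fun z => k' z * A z))
    (h2 : Integrable (fun z => k z * A' z)) (hB : ∀ z, |k z * A z| ≤ C * auxB z) :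
    ∫ z, k z * A' z = - ∫ z, k' z * A z := by
  have hlim : ∀ l : Filter ℝ, Tendsto auxB l (𝓝 0) → Tendsto (fun z => k z * A z) l (𝓝 0) := by
    intro l hl
    refine squeeze_zero_norm (a := fun z => C * auxB z) hB ?_
    simpa using hl.const_mul C
  have h00 : auxB 0 = 0 := by simp [auxB]
  have hz : k 0 * A 0 = 0 := by
    have := hB 0
    rw [h00, mul_zero] at this
    exact abs_nonpos_iff.1 this
  have hc : ContinuousAt (fun z => k z * A z) 0 := by
    show Tendsto (fun z => k z * A z) (𝓝 0) (𝓝 (k 0 * A 0))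
    rw [hz]
    apply hlim
    have := auxB_cont.tendsto 0
    rwa [h00] at this
  have hd : ∀ z, z ≠ 0 → HasDerivAt (fun z => k z * A z) (k' z * A z + k z * A' z) z :=
    fun z hz => (hk z hz).mul (hA z)
  have hi := h1.add h2
  have e1 := integral_Ioi_of_hasDerivAt_of_tendsto hc.continuousWithinAt
    (fun x hx => hd x (ne_of_gt hx)) hi.integrableOn (hlim _ auxB_top)
  have e2 := integral_Iic_of_hasDerivAt_of_tendsto hc.continuousWithinAt
    (fun x hx => hd x (ne_of_lt hx)) hi.integrableOn (hlim _ auxB_bot)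
  have e3 := intervalIntegral.integral_Iic_add_Ioi (b := (0 : ℝ)) hi.integrableOn hi.integrableOn
  rw [show (fun z => k' z * A z) + (fun z => k z * A' z) = fun z => k' z * A z + k z * A' z from rfl]
    at e3
  rw [e1, e2, integral_add h1 h2] at e3
  linarith

lemma aux_lip (f : ℝ → ℝ) (hf : ContDiff ℝ 2 f) (M : ℝ) (hM : ∀ x, |deriv f x| ≤ M) (x : ℝ) :
    ∃ C, 0 ≤ C ∧ ∀ t ∈ Metric.ball x 1, ∀ z, |deriv f (t + z) - deriv f t| ≤ C * |z| := by
  have hd : ContDiff ℝ 1 (deriv f) := by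
    have : ContDiff ℝ (1 + 1) f := by simpa [one_add_one_eq_two] using hf
    exact (contDiff_succ_iff_deriv.1 this).2.2
  have hdd : Continuous (deriv (deriv f)) := hd.continuous_deriv le_rfl
  obtain ⟨L, hL⟩ := (isCompact_closedBall x 2).exists_bound_of_continuousOn hdd.continuousOn
  have hM0 : 0 ≤ M := (abs_nonneg _).trans (hM 0)
  have hL0 : 0 ≤ L := (norm_nonneg _).trans (hL x (by simp))
  refine ⟨L + 2 * M, by positivity, fun t ht z => ?_⟩
  rw [Metric.mem_ball, Real.dist_eq] at ht
  rcases le_or_gt |z| 1 with hz | hz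
  · have := (convex_closedBall x 2).norm_image_sub_le_of_norm_deriv_le (f := deriv f)
      (x := t) (y := t + z) (C := L)
      (fun y _ => (hd.differentiable (by norm_num)) y) hL
      (by rw [Metric.mem_closedBall, Real.dist_eq]; linarith)
      (by
        rw [Metric.mem_closedBall, Real.dist_eq, show t + z - x = (t - x) + z by ring]
        linarith [abs_add_le (t - x) z])
    simp only [Real.norm_eq_abs, add_sub_cancel_left] at this
    nlinarith [abs_nonneg z]
  · have h1 := abs_sub (deriv f (t + z)) (deriv f t)
    have := hM (t + z)
    have := hM t
    nlinarith

theorem stmt18 (f : ℝ → ℝ) (hf : ContDiff ℝ 2 f)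
    (hfb : ∃ M, ∀ x, |f x| ≤ M) (hfb' : ∃ M, ∀ x, |deriv f x| ≤ M)
    (hfi : Integrable f) :
    ∀ x : ℝ,
      DifferentiableAt ℝ (fun t => ∫ z : ℝ, Kfun (t - z) * f z) x ∧
      DifferentiableAt ℝ (deriv (fun t => ∫ z : ℝ, Kfun (t - z) * f z)) x ∧
      deriv (deriv (fun t => ∫ z : ℝ, Kfun (t - z) * f z)) x =
        ∫ z : ℝ, (f (x + z) - f x - z * deriv f x) * deriv (deriv Kfun) z := by
  obtain ⟨N, hN⟩ := hfb
  obtain ⟨M, hM⟩ := hfb'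
  have hM0 : 0 ≤ M := (abs_nonneg _).trans (hM 0)
  have hfc : Continuous f := hf.continuous
  have hfd : ∀ y, HasDerivAt f (deriv f y) y :=
    fun y => (hf.differentiable (by norm_num) y).hasDerivAt
  have hd : ContDiff ℝ 1 (deriv f) := by
    have : ContDiff ℝ (1 + 1) f := by simpa [one_add_one_eq_two] using hf
    exact (contDiff_succ_iff_deriv.1 this).2.2
  have hdc : Continuous (deriv f) := hd.continuous
  have hdd : ∀ y, HasDerivAt (deriv f) (deriv (deriv f) y) y :=
    fun y => (hd.differentiable (by norm_num) y).hasDerivAt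
  have hlip : ∀ t z, |f (t + z) - f t| ≤ M * |z| := by
    intro t z
    have := convex_univ.norm_image_sub_le_of_norm_deriv_le (f := f) (x := t) (y := t + z) (C := M)
      (fun y _ => (hfd y).differentiableAt) (fun y _ => hM y) (mem_univ _) (mem_univ _)
    simpa [Real.norm_eq_abs] using this
  have hG : (fun t => ∫ z : ℝ, Kfun (t - z) * f z) = fun t => ∫ z : ℝ, Kfun z * f (t + z) := by
    funext t
    rw [← integral_add_left_eq_self (fun z => Kfun (t - z) * f z) t]
    congr 1
    funext z
    rw [show t - (t + z) = -z by ring, aux_even]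
  have hKf' : ∀ t, Integrable (fun z => Kfun z * deriv f (t + z)) := by
    intro t
    refine aux_K_int.mul_bdd (c := M) (by fun_prop) (Eventually.of_forall fun z => hM _)
  have hG1 : ∀ t, HasDerivAt (fun t => ∫ z : ℝ, Kfun z * f (t + z))
      (∫ z, Kfun z * deriv f (t + z)) t := by
    intro t
    refine (hasDerivAt_integral_of_dominated_loc_of_deriv_le (s := univ)
      (F := fun t z => Kfun z * f (t + z)) (F' := fun t z => Kfun z * deriv f (t + z))
      (bound := fun z => |Kfun z| * M) univ_mem ?_ ?_ ?_ ?_ ?_ ?_).2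
    · refine Eventually.of_forall fun t => ?_
      exact (aux_K_meas.mul (by fun_prop)).aestronglyMeasurable
    · exact aux_K_int.mul_bdd (c := N) (by fun_prop) (Eventually.of_forall fun z => hN _)
    · exact (aux_K_meas.mul (by fun_prop)).aestronglyMeasurable
    · refine Eventually.of_forall fun z t _ => ?_
      rw [norm_mul, Real.norm_eq_abs, Real.norm_eq_abs]
      exact mul_le_mul_of_nonneg_left (hM _) (abs_nonneg _)
    · exact aux_K_int.abs.mul_const M
    · refine Eventually.of_forall fun z t _ => ?_
      exact ((hfd (t + z)).comp_add_const t z).const_mul _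
  have hz0 : ∀ᵐ z : ℝ, z ≠ 0 := by
    simp [ae_iff]
  have hI1 : ∀ t, Integrable (fun z => auxk1 z * (f (t + z) - f t)) := by
    intro t
    refine (aux_int_exp.const_mul (2 * M)).mono'
      (aux_k1_meas.mul (by fun_prop)).aestronglyMeasurable ?_
    filter_upwards [hz0] with z hz
    have hz' : 0 < |z| := abs_pos.2 hz
    rw [norm_mul, Real.norm_eq_abs, Real.norm_eq_abs]
    calc _ ≤ 2 * (Real.exp (-|z|) / |z|) * (M * |z|) :=
          mul_le_mul (aux_k1_bd z) (hlip t z) (abs_nonneg _) (by positivity)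
      _ = _ := by field_simp
  have hshift : ∀ (t z : ℝ), HasDerivAt (fun z => f (t + z) - f t) (deriv f (t + z)) z :=
    fun t z => ((hfd (t + z)).comp_const_add t z).sub_const _
  have hG1' : ∀ t, ∫ z, Kfun z * deriv f (t + z) = -∫ z, auxk1 z * (f (t + z) - f t) := by
    intro t
    refine aux_ibp Kfun auxk1 (fun z => f (t + z) - f t) (fun z => deriv f (t + z)) (2 * M)
      (fun z hz => aux_k1 hz) (hshift t) (hI1 t) (hKf' t) fun z => ?_
    rw [abs_mul]
    calc _ ≤ 2 * √(Real.exp (-|z|) / |z|) * (M * |z|) :=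
          mul_le_mul (aux_K_bd z) (hlip t z) (abs_nonneg _) (by positivity)
      _ = 2 * M * (√(Real.exp (-|z|) / |z|) * |z|) := by ring
      _ = 2 * M * auxB z := by
          congr 1
          rw [auxB]
          have hsq : √(|z| ^ 2) = |z| := Real.sqrt_sq (abs_nonneg z)
          have hmul := Real.sqrt_mul (x := Real.exp (-|z|) / |z|) (by positivity) (|z| ^ 2)
          rw [hsq] at hmul
          rw [← hmul]
          congr 1
          rcases eq_or_ne z 0 with h | h
          · simp [h]
          · have := abs_pos.2 h
            field_simp
  intro x
  obtain ⟨C, hC0, hC⟩ := aux_lip f hf M hM x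
  have hI2bd : ∀ t ∈ Metric.ball x 1, ∀ z, z ≠ 0 →
      ‖auxk1 z * (deriv f (t + z) - deriv f t)‖ ≤ 2 * C * Real.exp (-|z|) := by
    intro t ht z hz
    have hz' : 0 < |z| := abs_pos.2 hz
    rw [norm_mul, Real.norm_eq_abs, Real.norm_eq_abs]
    calc _ ≤ 2 * (Real.exp (-|z|) / |z|) * (C * |z|) :=
          mul_le_mul (aux_k1_bd z) (hC t ht z) (abs_nonneg _) (by positivity)
      _ = _ := by field_simp
  have hG2 := hasDerivAt_integral_of_dominated_loc_of_deriv_le (s := Metric.ball x 1) (μ := volume)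
      (F := fun t z => auxk1 z * (f (t + z) - f t))
      (F' := fun t z => auxk1 z * (deriv f (t + z) - deriv f t))
      (bound := fun z => 2 * C * Real.exp (-|z|)) (Metric.ball_mem_nhds x one_pos)
      (Eventually.of_forall fun t => (hI1 t).aestronglyMeasurable) (hI1 x)
      (aux_k1_meas.mul (by fun_prop)).aestronglyMeasurable
      (by filter_upwards [hz0] with z hz t ht using hI2bd t ht z hz)
      (aux_int_exp.const_mul _)
      (Eventually.of_forall fun z t _ =>
        (((hfd (t + z)).comp_add_const t z).sub (hfd t)).const_mul _)
  obtain ⟨hI2, hG2⟩ := hG2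
  have hderiv : deriv (fun t => ∫ z : ℝ, Kfun (t - z) * f z) =
      fun t => -∫ z, auxk1 z * (f (t + z) - f t) := by
    rw [hG]
    funext t
    rw [(hG1 t).deriv, hG1']
  have hxb : x ∈ Metric.ball x 1 := Metric.mem_ball_self one_pos
  have hRd : ∀ z, HasDerivAt (fun z => f (x + z) - f x - z * deriv f x)
      (deriv f (x + z) - deriv f x) z := by
    intro z
    have := (hshift x z).sub ((hasDerivAt_id z).mul_const (deriv f x))
    exact this.congr_deriv (by simp)
  have hR : ∀ z, |f (x + z) - f x - z * deriv f x| ≤ C * |z| ^ 2 := by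
    intro z
    have := (convex_closedBall (0 : ℝ) |z|).norm_image_sub_le_of_norm_hasDerivWithin_le
      (f := fun z => f (x + z) - f x - z * deriv f x) (x := 0) (y := z) (C := C * |z|)
      (fun y _ => (hRd y).hasDerivWithinAt)
      (fun y hy => by
        rw [mem_closedBall_zero_iff, Real.norm_eq_abs] at hy
        exact (hC x hxb y).trans (by gcongr))
      (by simp) (by simp)
    simp only [Real.norm_eq_abs, add_zero, sub_self, zero_mul, sub_zero] at this
    calc _ ≤ _ := this
      _ = _ := by ring
  have hI3 : Integrable (fun z => auxk2 z * (f (x + z) - f x - z * deriv f x)) := by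
    refine (aux_int_exp.const_mul (8 * C)).mono'
      (aux_k2_meas.mul (by fun_prop)).aestronglyMeasurable ?_
    filter_upwards [hz0] with z hz
    have hz' : 0 < |z| := abs_pos.2 hz
    rw [norm_mul, Real.norm_eq_abs, Real.norm_eq_abs]
    calc _ ≤ 8 * (Real.exp (-|z|) / |z| ^ 2) * (C * |z| ^ 2) :=
          mul_le_mul (aux_k2_bd z) (hR z) (abs_nonneg _) (by positivity)
      _ = _ := by field_simp
  have hibp := aux_ibp auxk1 auxk2 (fun z => f (x + z) - f x - z * deriv f x)
      (fun z => deriv f (x + z) - deriv f x) (2 * C)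
      (fun z hz => aux_k2 hz) hRd hI3 hI2 fun z => by
    rw [abs_mul]
    calc _ ≤ 2 * (Real.exp (-|z|) / |z|) * (C * |z| ^ 2) :=
          mul_le_mul (aux_k1_bd z) (hR z) (abs_nonneg _) (by positivity)
      _ = 2 * C * (|z| * Real.exp (-|z|)) := by
          rcases eq_or_ne z 0 with h | h
          · simp [h]
          · have := abs_pos.2 h
            field_simp
      _ ≤ 2 * C * auxB z := by
          gcongr
          rw [auxB]
          apply Real.le_sqrt_of_sq_le
          have h1 : |z| * Real.exp (-|z|) ≤ 1 := by
            have h2 : |z| ≤ Real.exp |z| := by linarith [Real.add_one_le_exp |z|]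
            calc _ ≤ Real.exp |z| * Real.exp (-|z|) := by gcongr
              _ = 1 := by rw [← Real.exp_add]; simp
          have h0 : 0 ≤ |z| * Real.exp (-|z|) := by positivity
          nlinarith
  refine ⟨?_, ?_, ?_⟩
  · rw [hG]; exact (hG1 x).differentiableAt
  · rw [hderiv]; exact hG2.neg.differentiableAt
  · rw [hderiv]
    refine hG2.neg.deriv.trans ?_
    rw [hibp, neg_neg]
    refine integral_congr_ae ?_
    filter_upwards [hz0] with z hz
    rw [aux_dd hz, mul_comm]
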